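/- Let α > 1, r = (1/2)(1 - 1/α), s ≥ 2, and let a₁,…,a_k be positive integers with a_{2i-1} + a_{2i} = s for each i. Set ā = ⌊s/2⌋, b̄ = s - ā, and n''_* = ⌊-log_r ā⌋ + 1. If the even integer k satisfies k ≥ max{ ⌈2(1-r+r^{n''_*})^{ā-1}[b̄(1-r+r^{n''_*}) + ā] / ((1-r)^{ā-1}(1-r^{n''_*})^{b̄-1}[b̄(1-r)+ā(1-r^{n''_*})]) + 2⌉·((1-r)/r)^{ā}, 2((1-r)/r)^{ā+1}, 2(1/(1-r))^{s-1} + 2 }, then [0, k/2] = { ∑_{i=1}^{k/2} x_{2i-1}^{a_{2i-1}} x_{2i}^{a_{2i}} : x₁,…,x_k ∈ C_α }. -/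

import Mathlib

/-- The `n`-th stage of the Cantor construction with ratio `r`:
`C_0 = [0,1]`, `C_{n+1} = f₀(C_n) ∪ f₁(C_n)` with `f₀ x = r x`, `f₁ x = r x + (1-r)`. -/
def preCantorR (r : ℝ) : ℕ → Set ℝ
  | 0 => Set.Icc 0 1
  | n + 1 =>
      (fun x => r * x) '' preCantorR r n ∪ (fun x => r * x + (1 - r)) '' preCantorR r n

/-- The generalized Cantor set with contraction ratio `r`. -/
def cantorSetR (r : ℝ) : Set ℝ := ⋂ n, preCantorR r n

/-- The classical Cantor ternary set. -/
def cantorTernary : Set ℝ := cantorSetR (1/3)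

/-- `pairSumVec a m x = ∑_{i=1}^{m} x_{2i-1}^{a_{2i-1}} x_{2i}^{a_{2i}}` (0-indexed),
i.e. the non-diagonal form `f_{k,\vec a}` with `k = 2m`. -/
def pairSumVec (a : ℕ → ℕ) (m : ℕ) (x : ℕ → ℝ) : ℝ :=
  ∑ i ∈ Finset.range m, x (2 * i) ^ a (2 * i) * x (2 * i + 1) ^ a (2 * i + 1)

/-- The image `f_{k,\vec a}(S^k)` with `k = 2m`. -/
def imageOnVec (a : ℕ → ℕ) (m : ℕ) (S : Set ℝ) : Set ℝ :=
  {y | ∃ x : ℕ → ℝ, (∀ i, x i ∈ S) ∧ y = pairSumVec a m x}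

/-- `n''_* = ⌊-log_r ā⌋ + 1`. -/
noncomputable def nstar'' (r : ℝ) (abar : ℕ) : ℤ := ⌊-Real.logb r abar⌋ + 1

section CantorSet

variable {r : ℝ}

theorem isCompact_preCantorR (r : ℝ) (n : ℕ) : IsCompact (preCantorR r n) := by
  induction n with
  | zero => exact isCompact_Icc
  | succ n ih => exact (ih.image (by fun_prop)).union (ih.image (by fun_prop))

theorem isCompact_cantorSetR (r : ℝ) : IsCompact (cantorSetR r) :=
  (isCompact_preCantorR r 0).of_isClosed_subset
    (isClosed_iInter fun n => (isCompact_preCantorR r n).isClosed) (Set.iInter_subset _ 0)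

theorem cantorSetR_subset_Icc (r : ℝ) : cantorSetR r ⊆ Set.Icc 0 1 :=
  Set.iInter_subset (preCantorR r) 0

theorem zero_mem_cantorSetR (r : ℝ) : (0 : ℝ) ∈ cantorSetR r := by
  refine Set.mem_iInter.2 fun n => ?_
  induction n with
  | zero => simp [preCantorR]
  | succ n ih => exact Or.inl ⟨0, ih, by simp⟩

theorem one_mem_cantorSetR (r : ℝ) : (1 : ℝ) ∈ cantorSetR r := by
  refine Set.mem_iInter.2 fun n => ?_
  induction n with
  | zero => simp [preCantorR]
  | succ n ih => exact Or.inr ⟨1, ih, by simp⟩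

theorem mul_mem_cantorSetR (h0 : 0 ≤ r) (h1 : r ≤ 1) {x : ℝ} (hx : x ∈ cantorSetR r) :
    r * x ∈ cantorSetR r := by
  refine Set.mem_iInter.2 fun n => ?_
  cases n with
  | zero =>
    obtain ⟨hx0, hx1⟩ := cantorSetR_subset_Icc r hx
    exact ⟨mul_nonneg h0 hx0, mul_le_one₀ h1 hx0 hx1⟩
  | succ n => exact Or.inl ⟨x, Set.mem_iInter.1 hx n, rfl⟩

theorem mul_add_mem_cantorSetR (h0 : 0 ≤ r) (h1 : r ≤ 1) {x : ℝ} (hx : x ∈ cantorSetR r) :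
    r * x + (1 - r) ∈ cantorSetR r := by
  refine Set.mem_iInter.2 fun n => ?_
  cases n with
  | zero =>
    obtain ⟨hx0, hx1⟩ := cantorSetR_subset_Icc r hx
    exact ⟨by nlinarith, by nlinarith⟩
  | succ n => exact Or.inr ⟨x, Set.mem_iInter.1 hx n, rfl⟩

/-- `[p, p + l]` is an interval in which the Cantor set contains a scaled copy of itself. -/
def IsCantorNode (r p l : ℝ) : Prop :=
  0 ≤ p ∧ 0 < l ∧ ∀ t ∈ cantorSetR r, p + l * t ∈ cantorSetR r

theorem IsCantorNode.mem {p l : ℝ} (h : IsCantorNode r p l) : p ∈ cantorSetR r := by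
  simpa using h.2.2 0 (zero_mem_cantorSetR r)

theorem IsCantorNode.left (h0 : 0 < r) (h1 : r ≤ 1) {p l : ℝ} (h : IsCantorNode r p l) :
    IsCantorNode r p (r * l) := by
  refine ⟨h.1, mul_pos h0 h.2.1, fun t ht => ?_⟩
  convert h.2.2 _ (mul_mem_cantorSetR h0.le h1 ht) using 1
  ring

theorem IsCantorNode.right (h0 : 0 < r) (h1 : r ≤ 1) {p l : ℝ} (h : IsCantorNode r p l) :
    IsCantorNode r (p + (1 - r) * l) (r * l) := by
  refine ⟨add_nonneg h.1 (mul_nonneg (by linarith) h.2.1.le), mul_pos h0 h.2.1, fun t ht => ?_⟩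
  convert h.2.2 _ (mul_add_mem_cantorSetR h0.le h1 ht) using 1
  ring

end CantorSet

section PowerIncrement

/-- The length of the image of `[p, p + l]` under `x ↦ x ^ e`. -/
def powIncr (e : ℕ) (p l : ℝ) : ℝ := (p + l) ^ e - p ^ e

theorem powIncr_nonneg (e : ℕ) {p l : ℝ} (hp : 0 ≤ p) (hl : 0 ≤ l) : 0 ≤ powIncr e p l :=
  sub_nonneg.2 (pow_le_pow_left₀ hp (by linarith) e)

theorem pow_mul_powIncr_le (e : ℕ) {p l c : ℝ} (hp : 0 ≤ p) (hl : 0 ≤ l) (hc0 : 0 ≤ c)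
    (hc1 : c ≤ 1) : c ^ e * powIncr e p l ≤ powIncr e p (c * l) := by
  induction e with
  | zero => simp [powIncr]
  | succ e ih =>
    have hrec (l : ℝ) : powIncr (e + 1) p l = (p + l) * powIncr e p l + l * p ^ e := by
      simp only [powIncr]; ring
    rw [hrec, hrec]
    have hinc := powIncr_nonneg e hp hl
    have hce1 : c ^ e ≤ 1 := pow_le_one₀ hc0 hc1
    have hcl : 0 ≤ c * l := mul_nonneg hc0 hl
    calc c ^ (e + 1) * ((p + l) * powIncr e p l + l * p ^ e)
        = (c * p + c * l) * (c ^ e * powIncr e p l) + c ^ e * (c * l * p ^ e) := by ring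
      _ ≤ (p + c * l) * powIncr e p (c * l) + 1 * (c * l * p ^ e) := by
        gcongr
        exact mul_le_of_le_one_left hp hc1
      _ = _ := by ring

theorem powIncr_mul_le (e : ℕ) {p l c : ℝ} (hp : 0 ≤ p) (hl : 0 ≤ l) (hc0 : 0 ≤ c)
    (hc1 : c ≤ 1) : powIncr e p (c * l) ≤ c * powIncr e p l := by
  have h := (convexOn_pow e).2 (show p ∈ Set.Ici (0 : ℝ) from hp)
    (show p + l ∈ Set.Ici (0 : ℝ) from add_nonneg hp hl) (sub_nonneg.2 hc1) hc0 (by ring)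
  simp only [smul_eq_mul] at h
  rw [show (1 - c) * p + c * (p + l) = p + c * l by ring] at h
  simp only [powIncr]
  linarith

theorem powIncr_add (e : ℕ) (p l l' : ℝ) :
    powIncr e p (l + l') = powIncr e p l + powIncr e (p + l) l' := by
  simp only [powIncr, add_assoc]; ring

end PowerIncrement

theorem Finset.sum_eq_add_sub_of_eq_off {ι : Type*} {s : Finset ι} {i : ι} (hi : i ∈ s)
    {f g : ι → ℝ} (h : ∀ j, j ≠ i → g j = f j) :
    ∑ j ∈ s, g j = ∑ j ∈ s, f j + (g i - f i) := by
  classical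
  rw [← Finset.add_sum_erase s g hi, ← Finset.add_sum_erase s f hi,
    Finset.sum_congr rfl fun j hj => h j (Finset.ne_of_mem_erase hj)]
  ring

section PowerSums

variable {r : ℝ} {m E : ℕ} {e : ℕ → ℕ} {y : ℝ}

/-- A choice of one interval of the Cantor construction for each summand, such that `y` is
between the sums of the `e i`-th powers of the left and of the right end points, and no
interval has become too short compared with what remains to be represented. -/
structure IsAdmissible (r : ℝ) (m E : ℕ) (e : ℕ → ℕ) (y : ℝ) (p l : ℕ → ℝ) : Prop where
  node : ∀ j, IsCantorNode r (p j) (l j)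
  lower : ∑ j ∈ Finset.range m, p j ^ e j ≤ y
  upper : y ≤ ∑ j ∈ Finset.range m, p j ^ e j + ∑ j ∈ Finset.range m, powIncr (e j) (p j) (l j)
  balanced : ∀ i ∈ Finset.range m, ∀ j ∈ Finset.range m,
    (r / (1 - r)) ^ E * min (y - ∑ j ∈ Finset.range m, p j ^ e j)
      ((1 - r) * powIncr (e i) (p i) (l i)) ≤ powIncr (e j) (p j) (l j)

/-- Dividing the longest interval: take the right part whenever it is not too large. -/
theorem IsAdmissible.exists_step (h0 : 0 < r) (h1 : r ≤ 1 / 2) (hm : 0 < m)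
    (he : ∀ j < m, e j ≤ E) (hmE : ((1 - r) / r) ^ E ≤ m) {p l : ℕ → ℝ}
    (h : IsAdmissible r m E e y p l) :
    ∃ p' l', IsAdmissible r m E e y p' l' ∧
      ∑ j ∈ Finset.range m, powIncr (e j) (p' j) (l' j) ≤
        (1 - r ^ E / m) * ∑ j ∈ Finset.range m, powIncr (e j) (p j) (l j) := by
  have hr1 : r ≤ 1 := by linarith
  have hs : 0 < 1 - r := by linarith
  have hm' : (0 : ℝ) < m := by exact_mod_cast hm
  obtain ⟨I, hI, hmax⟩ := Finset.exists_max_image (Finset.range m)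
    (fun j => powIncr (e j) (p j) (l j)) ⟨0, Finset.mem_range.2 hm⟩
  have hIE : e I ≤ E := he I (Finset.mem_range.1 hI)
  obtain ⟨hp, hl, -⟩ := h.node I
  set c : ℝ := (r / (1 - r)) ^ E with hc
  have hq0 : 0 < r / (1 - r) := div_pos h0 hs
  have hq1 : r / (1 - r) ≤ 1 := (div_le_one hs).2 (by linarith)
  have hc0 : 0 < c := pow_pos hq0 E
  have hmc : 1 ≤ m * c := by
    have : c = (((1 - r) / r) ^ E)⁻¹ := by rw [hc, ← inv_pow, inv_div]
    rw [this, ← div_eq_mul_inv]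
    exact (one_le_div (by positivity)).2 hmE
  set z : ℝ := y - ∑ j ∈ Finset.range m, p j ^ e j with hz
  have hz0 : 0 ≤ z := sub_nonneg.2 h.lower
  set M : ℝ := powIncr (e I) (p I) (l I) with hM
  have hM0 : 0 ≤ M := powIncr_nonneg _ hp hl.le
  set o : ℝ := powIncr (e I) (p I) ((1 - r) * l I) with ho
  have hoM : o ≤ (1 - r) * M := powIncr_mul_le _ hp hl.le hs.le (by linarith)
  set L : ℝ := powIncr (e I) (p I) (r * l I) with hL
  set R : ℝ := powIncr (e I) (p I + (1 - r) * l I) (r * l I) with hR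
  have hoR : o + R = M := by
    rw [ho, hR, ← powIncr_add, hM]; congr 1; ring
  have hLM : L ≤ r * M := powIncr_mul_le _ hp hl.le h0.le hr1
  have hrE : r ^ E ≤ r ^ e I := pow_le_pow_of_le_one h0.le hr1 hIE
  have hML : r ^ E * M ≤ L :=
    (mul_le_mul_of_nonneg_right hrE hM0).trans (pow_mul_powIncr_le _ hp hl.le h0.le hr1)
  have hoL : c * o ≤ L := by
    have ho0 : 0 ≤ o := powIncr_nonneg _ hp (by positivity)
    have h2 := pow_mul_powIncr_le (e I) hp (mul_nonneg hs.le hl.le) hq0.le hq1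
    rw [show r / (1 - r) * ((1 - r) * l I) = r * l I by field_simp] at h2
    exact (mul_le_mul_of_nonneg_right (pow_le_pow_of_le_one hq0.le hq1 hIE) ho0).trans h2
  have hsum : ∑ j ∈ Finset.range m, powIncr (e j) (p j) (l j) ≤ m * M := by
    simpa using Finset.sum_le_card_nsmul (Finset.range m) _ M hmax
  have hdecay : ∀ N, N ≤ M - r ^ E * M →
      ∑ j ∈ Finset.range m, powIncr (e j) (p j) (l j) + (N - M) ≤
        (1 - r ^ E / m) * ∑ j ∈ Finset.range m, powIncr (e j) (p j) (l j) := by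
    intro N hN
    have : r ^ E / m * ∑ j ∈ Finset.range m, powIncr (e j) (p j) (l j) ≤ r ^ E * M := by
      calc _ ≤ r ^ E / m * (m * M) := by gcongr
        _ = _ := by field_simp
    linarith
  by_cases hzo : z < o
  · have hlow : ∀ j ∈ Finset.range m, c * z ≤ powIncr (e j) (p j) (l j) := by
      intro j hj
      have := h.balanced I hI j hj
      rwa [min_eq_left (by linarith)] at this
    set l' := Function.update l I (r * l I) with hl'
    have hl'I : l' I = r * l I := by simp [hl']
    have hl'j : ∀ j, j ≠ I → l' j = l j := fun j hj => by simp [hl', hj]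
    have hlow' : ∀ j ∈ Finset.range m, c * z ≤ powIncr (e j) (p j) (l' j) := by
      intro j hj
      by_cases hjI : j = I
      · subst hjI
        rw [hl'I]
        exact (mul_le_mul_of_nonneg_left hzo.le hc0.le).trans hoL
      · rw [hl'j j hjI]; exact hlow j hj
    refine ⟨p, l', ⟨fun j => ?_, h.lower, ?_, ?_⟩, ?_⟩
    · by_cases hjI : j = I
      · subst hjI
        rw [hl'I]; exact (h.node j).left h0 hr1
      · rw [hl'j j hjI]; exact h.node j
    · have h3 : m * (c * z) ≤ ∑ j ∈ Finset.range m, powIncr (e j) (p j) (l' j) := by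
        simpa using Finset.card_nsmul_le_sum (Finset.range m) _ (c * z) hlow'
      nlinarith
    · intro i _ j hj
      exact (mul_le_mul_of_nonneg_left (min_le_left _ _) hc0.le).trans (hlow' j hj)
    · rw [Finset.sum_eq_add_sub_of_eq_off hI (f := fun j => powIncr (e j) (p j) (l j))
        (fun j hj => by rw [hl'j j hj]), hl'I]
      refine hdecay L ?_
      nlinarith
  · push Not at hzo
    set l' := Function.update l I (r * l I) with hl'
    have hl'I : l' I = r * l I := by simp [hl']
    have hl'j : ∀ j, j ≠ I → l' j = l j := fun j hj => by simp [hl', hj]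
    set p' := Function.update p I (p I + (1 - r) * l I) with hp'
    have hp'I : p' I = p I + (1 - r) * l I := by simp [hp']
    have hp'j : ∀ j, j ≠ I → p' j = p j := fun j hj => by simp [hp', hj]
    have hsumP : ∑ j ∈ Finset.range m, p' j ^ e j = ∑ j ∈ Finset.range m, p j ^ e j + o := by
      rw [Finset.sum_eq_add_sub_of_eq_off hI (f := fun j => p j ^ e j)
        (fun j hj => by rw [hp'j j hj]), hp'I]
      rfl
    have hsumL : ∑ j ∈ Finset.range m, powIncr (e j) (p' j) (l' j) =
        ∑ j ∈ Finset.range m, powIncr (e j) (p j) (l j) + (R - M) := by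
      rw [Finset.sum_eq_add_sub_of_eq_off hI (f := fun j => powIncr (e j) (p j) (l j))
        (fun j hj => by rw [hp'j j hj, hl'j j hj]), hp'I, hl'I]
    have hLo : L ≤ o := by
      have : o = L + powIncr (e I) (p I + r * l I) ((1 - 2 * r) * l I) := by
        rw [ho, show (1 - r) * l I = r * l I + (1 - 2 * r) * l I by ring, powIncr_add]
      have h4 : 0 ≤ powIncr (e I) (p I + r * l I) ((1 - 2 * r) * l I) :=
        powIncr_nonneg _ (by positivity) (mul_nonneg (by linarith) hl.le)
      linarith
    have hRM : c * ((1 - r) * M) ≤ R := by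
      by_cases hE : E = 0
      · have hI0 : e I = 0 := by omega
        have : M = 0 := by simp [hM, powIncr, hI0]
        have hR0 : R = 0 := by simp [hR, powIncr, hI0]
        simp [this, hR0]
      · have : c ≤ r / (1 - r) := pow_le_of_le_one hq0.le hq1 hE
        calc c * ((1 - r) * M) ≤ r / (1 - r) * ((1 - r) * M) := by gcongr
          _ = r * M := by field_simp
          _ ≤ R := by linarith
    refine ⟨p', l', ⟨fun j => ?_, ?_, ?_, ?_⟩, ?_⟩
    · by_cases hjI : j = I
      · subst hjI
        rw [hl'I, hp'I]; exact (h.node j).right h0 hr1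
      · rw [hl'j j hjI, hp'j j hjI]; exact h.node j
    · rw [hsumP]; linarith
    · rw [hsumP, hsumL]
      linarith [h.upper]
    · intro i hi j hj
      rw [hsumP]
      have hiM : powIncr (e i) (p' i) (l' i) ≤ M := by
        by_cases hiI : i = I
        · subst hiI
          rw [hp'I, hl'I]
          have : 0 ≤ o := powIncr_nonneg _ hp (by positivity)
          linarith
        · rw [hp'j i hiI, hl'j i hiI]; exact hmax i hi
      have hmin : min (y - (∑ j ∈ Finset.range m, p j ^ e j + o))
          ((1 - r) * powIncr (e i) (p' i) (l' i)) ≤ min z ((1 - r) * M) := by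
        have : 0 ≤ o := powIncr_nonneg _ hp (by positivity)
        refine min_le_min (by linarith) (by gcongr)
      refine (mul_le_mul_of_nonneg_left hmin hc0.le).trans ?_
      by_cases hjI : j = I
      · subst hjI
        rw [hp'I, hl'I]
        exact (mul_le_mul_of_nonneg_left (min_le_right _ _) hc0.le).trans hRM
      · rw [hp'j j hjI, hl'j j hjI]; exact h.balanced I hI j hj
    · rw [hsumL]
      refine hdecay R ?_
      linarith

theorem exists_isAdmissible (h0 : 0 < r) (h1 : r ≤ 1 / 2) (hm : 0 < m)
    (he0 : ∀ j < m, e j ≠ 0) (he : ∀ j < m, e j ≤ E) (hmE : ((1 - r) / r) ^ E ≤ m)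
    (hy : y ∈ Set.Icc (0 : ℝ) m) (n : ℕ) :
    ∃ p l, IsAdmissible r m E e y p l ∧
      ∑ j ∈ Finset.range m, powIncr (e j) (p j) (l j) ≤ (1 - r ^ E / m) ^ n * m := by
  have hm' : (1 : ℝ) ≤ m := by exact_mod_cast hm
  induction n with
  | zero =>
    have hincr : ∀ j ∈ Finset.range m, powIncr (e j) 0 1 = 1 := fun j hj => by
      simp [powIncr, he0 j (Finset.mem_range.1 hj)]
    have hpow : ∑ j ∈ Finset.range m, (0 : ℝ) ^ e j = 0 :=
      Finset.sum_eq_zero fun j hj => zero_pow (he0 j (Finset.mem_range.1 hj))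
    have hsum : ∑ j ∈ Finset.range m, powIncr (e j) 0 1 = m := by
      rw [Finset.sum_congr rfl hincr]; simp
    refine ⟨fun _ => 0, fun _ => 1, ⟨fun j => ⟨le_rfl, one_pos, by simp⟩, ?_, ?_, ?_⟩, ?_⟩
    · rw [hpow]; exact hy.1
    · rw [hpow, hsum, zero_add]; exact hy.2
    · intro i hi j hj
      rw [hincr i hi, hincr j hj, hpow, sub_zero]
      have hs : 0 < 1 - r := by linarith
      have hq : (r / (1 - r)) ^ E ≤ 1 :=
        pow_le_one₀ (by positivity) ((div_le_one hs).2 (by linarith))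
      refine mul_le_one₀ hq (le_min hy.1 (by linarith)) ((min_le_right _ _).trans (by linarith))
    · simp [hsum]
  | succ n ih =>
    obtain ⟨p, l, h, hs⟩ := ih
    obtain ⟨p', l', h', hs'⟩ := h.exists_step h0 h1 hm he hmE
    refine ⟨p', l', h', hs'.trans ?_⟩
    have hθ : r ^ E / m ≤ 1 :=
      (div_le_one (by linarith)).2 ((pow_le_one₀ h0.le (by linarith)).trans hm')
    rw [pow_succ', mul_assoc]
    exact mul_le_mul_of_nonneg_left hs (sub_nonneg.2 hθ)

/-- Every point of `[0, m]` is a sum of `m` powers, with exponents between `1` and `E`, of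
points of the Cantor set with ratio `r`, provided that `((1 - r) / r) ^ E ≤ m`. -/
theorem exists_sum_pow_eq_of_cantorSetR (h0 : 0 < r) (h1 : r ≤ 1 / 2) (hm : 0 < m)
    (he0 : ∀ j < m, e j ≠ 0) (he : ∀ j < m, e j ≤ E) (hmE : ((1 - r) / r) ^ E ≤ m)
    (hy : y ∈ Set.Icc (0 : ℝ) m) :
    ∃ u : ℕ → ℝ, (∀ i, u i ∈ cantorSetR r) ∧ ∑ j ∈ Finset.range m, u j ^ e j = y := by
  have hm' : (1 : ℝ) ≤ m := by exact_mod_cast hm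
  have hcpt : IsCompact ((fun u : ℕ → ℝ => ∑ j ∈ Finset.range m, u j ^ e j) ''
      Set.univ.pi fun _ => cantorSetR r) :=
    (isCompact_univ_pi fun _ => isCompact_cantorSetR r).image (by fun_prop)
  have hmem : y ∈ (fun u : ℕ → ℝ => ∑ j ∈ Finset.range m, u j ^ e j) ''
      Set.univ.pi fun _ => cantorSetR r := by
    choose p l h hs using exists_isAdmissible h0 h1 hm he0 he hmE hy
    have hθ : r ^ E / m ≤ 1 :=
      (div_le_one (by linarith)).2 ((pow_le_one₀ h0.le (by linarith)).trans hm')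
    have hθ0 : 0 < r ^ E / m := by positivity
    have hlim : Filter.Tendsto (fun n : ℕ => y - (1 - r ^ E / m) ^ n * m) Filter.atTop
        (nhds y) := by
      simpa using ((tendsto_pow_atTop_nhds_zero_of_lt_one (sub_nonneg.2 hθ)
        (by linarith)).mul_const (m : ℝ)).const_sub y
    refine hcpt.isClosed.mem_of_tendsto (tendsto_of_tendsto_of_tendsto_of_le_of_le hlim
      tendsto_const_nhds (fun n => ?_) fun n => (h n).lower) (.of_forall fun n =>
        ⟨p n, fun j _ => ((h n).node j).mem, rfl⟩)
    have h2 := (h n).upper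
    have h3 := hs n
    simp only
    linarith
  obtain ⟨u, hu, rfl⟩ := hmem
  exact ⟨u, fun i => hu i trivial, rfl⟩

end PowerSums

theorem imageOnVec_cantorSetR_subset (a : ℕ → ℕ) (m : ℕ) (r : ℝ) :
    imageOnVec a m (cantorSetR r) ⊆ Set.Icc (0 : ℝ) m := by
  rintro _ ⟨x, hx, rfl⟩
  have hx0 : ∀ i, 0 ≤ x i := fun i => (cantorSetR_subset_Icc r (hx i)).1
  have hx1 : ∀ i, x i ≤ 1 := fun i => (cantorSetR_subset_Icc r (hx i)).2
  refine ⟨Finset.sum_nonneg fun i _ =>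
    mul_nonneg (pow_nonneg (hx0 _) _) (pow_nonneg (hx0 _) _), ?_⟩
  simpa [pairSumVec] using Finset.sum_le_card_nsmul (Finset.range m) _ (1 : ℝ) fun i _ =>
    mul_le_one₀ (pow_le_one₀ (hx0 (2 * i)) (hx1 _)) (pow_nonneg (hx0 _) _)
      (pow_le_one₀ (n := a (2 * i + 1)) (hx0 (2 * i + 1)) (hx1 _))

/-- Taking one variable of each pair, the one with the larger exponent, equal to `1` turns the
form into a sum of powers. -/
theorem exists_pairSumVec_eq_sum_pow {S : Set ℝ} (hS : (1 : ℝ) ∈ S) (a : ℕ → ℕ) (m : ℕ)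
    {u : ℕ → ℝ} (hu : ∀ i, u i ∈ S) :
    ∃ x : ℕ → ℝ, (∀ i, x i ∈ S) ∧
      pairSumVec a m x = ∑ i ∈ Finset.range m, u i ^ min (a (2 * i)) (a (2 * i + 1)) := by
  refine ⟨fun n => if (n % 2 = 0 ↔ a (2 * (n / 2)) ≤ a (2 * (n / 2) + 1)) then u (n / 2) else 1,
    fun n => ?_, Finset.sum_congr rfl fun i _ => ?_⟩
  · dsimp only
    split_ifs
    exacts [hu _, hS]
  · have h1 : (2 * i + 1) / 2 = i := by omega
    have h2 : (2 * i + 1) % 2 = 1 := by omega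
    have h3 : 2 * i / 2 = i := by omega
    have h4 : 2 * i % 2 = 0 := by omega
    by_cases h : a (2 * i) ≤ a (2 * i + 1)
    · simp [h1, h2, h3, h]
    · simp [h1, h2, h3, h, (not_le.1 h).le]

/-- Main theorem: with `ā = ⌊s/2⌋`, `b̄ = s - ā`, for any exponents `a_i` with
`a_{2i-1} + a_{2i} = s` and `k` even and large enough, `[0, k/2] = f_{k,\vec a}(C_α^k)`. -/
theorem stmt_16 (α r : ℝ) (hα : 1 < α) (hr : r = (1 - 1/α) / 2)
    (s : ℕ) (hs : 2 ≤ s) (k : ℕ) (hk : Even k) (hkpos : 0 < k)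
    (a : ℕ → ℕ) (hapos : ∀ i < k, 0 < a i)
    (hasum : ∀ i < k / 2, a (2 * i) + a (2 * i + 1) = s)
    (hkge : (k : ℝ) ≥
      max (max
        ((⌈2 * ((1 - r + r ^ nstar'' r (s / 2)) ^ (s / 2 - 1) *
              (((s - s / 2 : ℕ) : ℝ) * (1 - r + r ^ nstar'' r (s / 2)) + ((s / 2 : ℕ) : ℝ))) /
            ((1 - r) ^ (s / 2 - 1) * (1 - r ^ nstar'' r (s / 2)) ^ (s - s / 2 - 1) *
              (((s - s / 2 : ℕ) : ℝ) * (1 - r) +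
                ((s / 2 : ℕ) : ℝ) * (1 - r ^ nstar'' r (s / 2)))) + 2⌉ : ℤ) *
          ((1 - r) / r) ^ (s / 2))
        (2 * ((1 - r) / r) ^ (s / 2 + 1)))
        (2 * (1 / (1 - r)) ^ (s - 1) + 2)) :
    Set.Icc (0 : ℝ) ((k : ℝ) / 2) = imageOnVec a (k / 2) (cantorSetR r) := by
  obtain ⟨m, rfl⟩ := hk
  have hdiv : (m + m) / 2 = m := by omega
  have hm : 0 < m := by omega
  have hα' : 0 < 1 / α ∧ 1 / α < 1 :=
    ⟨by positivity, (div_lt_one (by linarith)).2 hα⟩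
  have h0 : 0 < r := by rw [hr]; linarith
  have h1 : r ≤ 1 / 2 := by rw [hr]; linarith
  have hcast : ((m + m : ℕ) : ℝ) / 2 = m := by push_cast; ring
  rw [hdiv] at hasum ⊢
  rw [hcast]
  refine Set.Subset.antisymm (fun y hy => ?_) (imageOnVec_cantorSetR_subset a m r)
  have hmE : ((1 - r) / r) ^ (s / 2) ≤ m := by
    have hge : 2 * ((1 - r) / r) ^ (s / 2 + 1) ≤ ((m + m : ℕ) : ℝ) :=
      (le_max_right _ _).trans ((le_max_left _ _).trans hkge)
    have hle : ((1 - r) / r) ^ (s / 2) ≤ ((1 - r) / r) ^ (s / 2 + 1) :=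
      pow_le_pow_right₀ ((one_le_div h0).2 (by linarith)) (Nat.le_succ _)
    linarith
  obtain ⟨u, hu, rfl⟩ := exists_sum_pow_eq_of_cantorSetR (E := s / 2)
    (e := fun i => min (a (2 * i)) (a (2 * i + 1))) h0 h1 hm
    (fun j hj => by
      have := hapos (2 * j) (by omega)
      have := hapos (2 * j + 1) (by omega)
      omega)
    (fun j hj => by
      have := hasum j hj
      omega) hmE hy
  obtain ⟨x, hx, hsum⟩ := exists_pairSumVec_eq_sum_pow (one_mem_cantorSetR r) a m hu
  exact ⟨x, hx, hsum.symm⟩
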